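/- For every integer n ≥ 1, ∑_{π ∈ D_n} (-1)^{inv(π)} ∏_{j ∈ EXCi(π)} x_j = (-1)^{n-1} ∑_{j=1}^{n-1} x_1 x_2 ⋯ x_j, as an identity of polynomials in the commuting variables x_1,…,x_n. -/

import Mathlib

open Finset MvPolynomial

/-- Number of inversions of a permutation of `Fin n`
(pairs `p.1 < p.2` with `π p.1 > π p.2`). -/
def inversions {n : ℕ} (π : Equiv.Perm (Fin n)) : ℕ :=
  (Finset.univ.filter fun p : Fin n × Fin n => p.1 < p.2 ∧ π p.2 < π p.1).card

/-- Excedance indices of a permutation. -/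
def EXCi {n : ℕ} (π : Equiv.Perm (Fin n)) : Finset (Fin n) :=
  Finset.univ.filter fun i => i < π i

/-- Excedance values of a permutation. -/
def EXCv {n : ℕ} (π : Equiv.Perm (Fin n)) : Finset (Fin n) :=
  (EXCi π).image π

/-- Right-to-left minima indices of a permutation. -/
def RLMi {n : ℕ} (π : Equiv.Perm (Fin n)) : Finset (Fin n) :=
  Finset.univ.filter fun i => ∀ j, i < j → π i < π j

/-- Right-to-left minima values of a permutation. -/
def RLMv {n : ℕ} (π : Equiv.Perm (Fin n)) : Finset (Fin n) :=
  (RLMi π).image π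

/-- The derangements of `Fin n`, i.e. permutations with no fixed point. -/
def derangementsF (n : ℕ) : Finset (Equiv.Perm (Fin n)) :=
  Finset.univ.filter fun π => ∀ i, π i ≠ i

lemma sign_eq_neg_one_pow_inversions {n : ℕ} (π : Equiv.Perm (Fin n)) :
    (Equiv.Perm.sign π : ℤˣ) = (-1) ^ inversions π := by
  rw [Equiv.Perm.sign_eq_prod_prod_Ioi, inversions, Finset.prod_sigma', ← Finset.prod_const]
  have h1 : ∏ x ∈ (Finset.univ : Finset (Fin n)).sigma (fun i => Finset.Ioi i),
      (if π x.1 < π x.2 then (1 : ℤˣ) else -1) =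
      ∏ p ∈ Finset.univ.filter (fun p : Fin n × Fin n => p.1 < p.2),
        (if π p.1 < π p.2 then (1 : ℤˣ) else -1) := by
    refine Finset.prod_nbij' (fun x => (x.1, x.2)) (fun p => ⟨p.1, p.2⟩) ?_ ?_ ?_ ?_ ?_ <;> simp
  rw [h1]
  symm
  rw [← Finset.filter_filter, Finset.prod_filter]
  refine Finset.prod_congr rfl ?_
  rintro ⟨a, b⟩ hab
  have hab' : a < b := by simpa using hab
  have hne : π a ≠ π b := fun h => hab'.ne (π.injective h)
  rcases lt_or_gt_of_ne hne with h | h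
  · simp [h, h.not_gt]
  · simp [h, h.not_gt]

/-- The excedance matrix. -/
def excMat {R : Type*} [CommRing R] {n : ℕ} (x : Fin n → R) : Matrix (Fin n) (Fin n) R :=
  fun i j => if i < j then x i else if j < i then 1 else 0

/-- The excedance matrix after subtracting consecutive columns. -/
def bidMat {R : Type*} [CommRing R] {n : ℕ} (x : Fin n → R) : Matrix (Fin n) (Fin n) R :=
  fun i j => if (j : ℕ) = 0 then (if (i : ℕ) = 0 then 0 else 1)
    else if (i : ℕ) + 1 = j then x i else if i = j then -1 else 0

lemma det_excMat_eq {R : Type*} [CommRing R] {n : ℕ} (x : Fin (n + 1) → R) :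
    (excMat x).det = (bidMat x).det := by
  apply Matrix.det_eq_of_forall_col_eq_smul_add_pred (fun _ => 1)
  · intro i
    by_cases h : (i : ℕ) = 0
    · simp [excMat, bidMat, Fin.lt_def, h]
    · simp [excMat, bidMat, Fin.lt_def, h, Nat.pos_of_ne_zero h]
  · intro i j
    simp only [excMat, bidMat, Fin.lt_def, Fin.ext_iff, Fin.val_succ, Fin.val_castSucc]
    rcases lt_trichotomy (i : ℕ) j with h | h | h
    · have h1 : (i : ℕ) < j + 1 := by omega
      have h2 : (i : ℕ) ≠ j + 1 := by omega
      simp [h, h1, h2, h.ne]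
    · simp [h]
    · by_cases h3 : (i : ℕ) = j + 1
      · simp [h3]
      · have h1 : ¬ (i : ℕ) < j + 1 := by omega
        have h2 : (j : ℕ) + 1 < i := by omega
        simp [h.ne', h.not_gt, h, h1, h2, h3]

lemma det_bidMat {R : Type*} [CommRing R] {n : ℕ} (x : Fin (n + 1) → R) :
    (bidMat x).det = (-1) ^ n *
      ∑ i : Fin n, ∏ k ∈ Finset.univ.filter (fun k : Fin (n + 1) => (k : ℕ) < i + 1), x k := by
  set w : Fin (n + 1) → R :=
    fun i => ∏ k ∈ Finset.univ.filter (fun k : Fin (n + 1) => (k : ℕ) < i), x k with hw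
  have hw0 : w 0 = 1 := by simp [hw]
  have hws : ∀ j : Fin n, w j.succ = x j.castSucc * w j.castSucc := by
    intro j
    have : Finset.univ.filter (fun k : Fin (n + 1) => (k : ℕ) < j.succ) =
        insert j.castSucc
          (Finset.univ.filter (fun k : Fin (n + 1) => (k : ℕ) < j.castSucc)) := by
      ext k
      simp only [Finset.mem_filter, Finset.mem_univ, true_and, Finset.mem_insert, Fin.ext_iff,
        Fin.val_succ, Fin.val_castSucc]
      omega
    simp only [hw]
    rw [this, Finset.prod_insert (by simp)]
  have h := Matrix.det_updateRow_sum (bidMat x) 0 w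
  rw [hw0, one_smul] at h
  rw [← h, Matrix.det_succ_row_zero, Fin.sum_univ_succ]
  have hz : ∀ j : Fin n, (∑ k, w k • bidMat x k) j.succ = 0 := by
    intro j
    rw [Finset.sum_apply]
    have hne : (j.castSucc : Fin (n + 1)) ≠ j.succ := by simp [Fin.ext_iff]
    rw [← Finset.sum_subset (Finset.subset_univ {j.castSucc, j.succ}),
      Finset.sum_pair hne]
    · simp [bidMat, hws, Fin.ext_iff, mul_comm]
    · intro k _ hk
      simp only [Finset.mem_insert, Finset.mem_singleton, not_or, Fin.ext_iff, Fin.val_succ,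
        Fin.val_castSucc] at hk
      simp [bidMat, Fin.ext_iff, hk.1, hk.2]
  have h0 : (∑ k, w k • bidMat x k) 0 = ∑ i : Fin n, w i.succ := by
    rw [Finset.sum_apply, Fin.sum_univ_succ]
    simp [bidMat]
  have hsub : (((bidMat x).updateRow 0 (∑ k, w k • bidMat x k)).submatrix Fin.succ
      (Fin.succAbove 0)).det = (-1) ^ n := by
    rw [Matrix.det_of_upperTriangular]
    · simp [bidMat, Matrix.updateRow_ne]
    · intro i j hij
      have hij' : (j : ℕ) < i := hij
      have h1 : (i : ℕ) + 1 ≠ j := by omega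
      simp [bidMat, Matrix.updateRow_ne, Fin.ext_iff, h1, hij'.ne']
  rw [hsub]
  simp only [Matrix.updateRow_self, hz, h0]
  simp only [Fin.val_zero, pow_zero, one_mul, mul_zero, zero_mul, Finset.sum_const_zero, add_zero,
    hw, Fin.val_succ]
  exact mul_comm _ _

lemma sum_derangements_eq_det {n : ℕ} :
    ∑ π ∈ derangementsF n,
      ((-1 : MvPolynomial (Fin n) ℤ) ^ inversions π) * ∏ j ∈ EXCi π, X j
    = (excMat (fun i : Fin n => (X i : MvPolynomial (Fin n) ℤ))).det := by
  rw [← Matrix.det_transpose, Matrix.det_apply', derangementsF, Finset.sum_filter]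
  refine Finset.sum_congr rfl fun π _ => ?_
  split_ifs with h
  · rw [sign_eq_neg_one_pow_inversions, EXCi, Finset.prod_filter]
    congr 1
    · simp
    · refine Finset.prod_congr rfl fun i _ => ?_
      rcases lt_or_gt_of_ne (h i) with h | h
      · simp [excMat, h, h.not_gt]
      · simp [excMat, h]
  · push Not at h
    obtain ⟨i, hi⟩ := h
    rw [Finset.prod_eq_zero (Finset.mem_univ i), mul_zero]
    simp [excMat, hi]

/-- Here `Fin n` represents `[n]` via `i ↦ i + 1`; the product
`x_1 ⋯ x_j` corresponds to the product of `X i` over `(i : ℕ) < j`. -/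
theorem stmt10 (n : ℕ) (hn : 1 ≤ n) :
    ∑ π ∈ derangementsF n,
      ((-1 : MvPolynomial (Fin n) ℤ) ^ inversions π) * ∏ j ∈ EXCi π, X j
    = (-1) ^ (n - 1) *
        ∑ j ∈ Finset.Icc 1 (n - 1),
          ∏ i ∈ Finset.univ.filter (fun i : Fin n => (i : ℕ) < j),
            (X i : MvPolynomial (Fin n) ℤ) := by
  obtain ⟨m, rfl⟩ : ∃ m, n = m + 1 := ⟨n - 1, by omega⟩
  rw [sum_derangements_eq_det, det_excMat_eq, det_bidMat]
  simp only [Nat.add_sub_cancel]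
  congr 1
  rw [Fin.sum_univ_eq_sum_range (fun j =>
    ∏ k ∈ Finset.univ.filter (fun k : Fin (m + 1) => (k : ℕ) < j + 1),
      (X k : MvPolynomial (Fin (m + 1)) ℤ)) m]
  rw [Finset.range_eq_Ico, Finset.sum_Ico_add' (fun j =>
    ∏ k ∈ Finset.univ.filter (fun k : Fin (m + 1) => (k : ℕ) < j),
      (X k : MvPolynomial (Fin (m + 1)) ℤ)) 0 m 1]
  rfl
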